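/- Conditional FDR control of the two-stage (screening then knockoff) procedure with data splitting: let (Ω, F, P) be a probability space, F₁ ⊆ F a sub-σ-algebra (generated by the first half of the data), and Â : Ω → 2^{{1,…,m}} an F₁-measurable random subset of {1,…,m} (the screened set). Let S ⊆ {1,…,m} be fixed (the true active set) and q ∈ [0,1]. Suppose that for every subset A ⊆ {1,…,m} with S ⊆ A there is a random subset Ŝ_A : Ω → 2^{A} (the GKnockoff selection computed from the second half of the data restricted to A) such that Ŝ_A is independent of F₁ and E[ #(Ŝ_A ∩ S^c) / max(#Ŝ_A, 1) ] ≤ q. Define the final selection Ŝ_H(ω) = Ŝ_{Â(ω)}(ω), and let E = {ω : S ⊆ Â(ω)} be the sure-screening event with P(E) > 0. Then E[ #(Ŝ_H ∩ S^c) / max(#Ŝ_H, 1) | E ] ≤ q. -/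

import Mathlib

open MeasureTheory ProbabilityTheory Finset

/-!
Conditioning on the screening outcome `Â = A` leaves the law of the second-stage loss of `Ŝ_A`
unchanged, by independence, so its conditional mean is at most `q`; averaging over the outcomes
`A ⊇ S` gives the bound on the sure-screening event.

The selections are not assumed measurable, so their integrals could be the junk value `0`.
Independence rules out any mismatch: a function that is measurable modulo null sets under the
conditional measure is so under the original measure as well, because the outer measures of an
event and of its complement are the same under both.
-/

section Conditioning

variable {Ω ι : Type*} {mΩ : MeasurableSpace Ω} [MeasurableSpace ι] {μ : Measure Ω}

lemma nullMeasurableSet_of_measure_add_measure_compl_le [IsFiniteMeasure μ] {s : Set Ω}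
    (h : μ s + μ sᶜ ≤ μ Set.univ) : NullMeasurableSet s μ := by
  set u := toMeasurable μ s
  set v := toMeasurable μ sᶜ
  have hsu : s ⊆ u := subset_toMeasurable μ s
  have hsv : sᶜ ⊆ v := subset_toMeasurable μ sᶜ
  have huv : u ∪ v = Set.univ :=
    Set.univ_subset_iff.1 (Set.union_compl_self s ▸ Set.union_subset_union hsu hsv)
  have hoverlap : μ (u ∩ v) = 0 := by
    have hle : μ Set.univ + μ (u ∩ v) ≤ μ Set.univ + 0 := by
      rw [← huv, measure_union_add_inter u (measurableSet_toMeasurable μ sᶜ),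
        measure_toMeasurable, measure_toMeasurable, huv, add_zero]
      exact h
    exact nonpos_iff_eq_zero.1 ((ENNReal.add_le_add_iff_left (measure_ne_top μ _)).1 hle)
  have hdiff : μ (u \ s) = 0 := measure_mono_null (Set.inter_subset_inter_right u hsv) hoverlap
  rw [← Set.sdiff_sdiff_cancel_left hsu]
  exact (measurableSet_toMeasurable μ s).nullMeasurableSet.diff (.of_null hdiff)

lemma integral_cond {E : Type*} [NormedAddCommGroup E] [NormedSpace ℝ E] (s : Set Ω) (f : Ω → E) :
    ∫ ω, f ω ∂μ[|s] = (μ.real s)⁻¹ • ∫ ω in s, f ω ∂μ := by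
  rw [ProbabilityTheory.cond, integral_smul_measure, ENNReal.toReal_inv, measureReal_def]

section Independence

lemma indepFun_of_indep {β : Type*} [MeasurableSpace β] {m₁ m₂ : MeasurableSpace Ω} {Z : Ω → ι}
    {f : Ω → β} (h : Indep m₁ m₂ μ) (hZ : Measurable[m₁] Z) (hf : Measurable[m₂] f) :
    IndepFun Z f μ :=
  (IndepFun_iff_Indep _ _ _).2 <|
    indep_of_indep_of_le_left (indep_of_indep_of_le_right h hf.comap_le) hZ.comap_le

variable [IsFiniteMeasure μ] {β : Type*} [MeasurableSpace β] {Z : Ω → ι} {f : Ω → β}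
  {t : Set ι} {s : Set β}

lemma cond_preimage_apply_preimage_of_indepFun (hZ : Measurable Z) (h : IndepFun Z f μ)
    (ht : MeasurableSet t) (hs : MeasurableSet s) (h0 : μ (Z ⁻¹' t) ≠ 0) :
    μ[|Z ⁻¹' t] (f ⁻¹' s) = μ (f ⁻¹' s) := by
  rw [cond_apply (hZ ht), h.measure_inter_preimage_eq_mul _ _ ht hs, ← mul_assoc,
    ENNReal.inv_mul_cancel h0 (measure_ne_top μ _), one_mul]

lemma aemeasurable_cond_preimage_iff_of_indepFun [MeasurableSpace.CountablyGenerated β]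
    (hZ : Measurable Z) (h : IndepFun Z f μ) (ht : MeasurableSet t) (h0 : μ (Z ⁻¹' t) ≠ 0) :
    AEMeasurable f μ[|Z ⁻¹' t] ↔ AEMeasurable f μ := by
  have hsame {s : Set β} (hs : MeasurableSet s) : μ[|Z ⁻¹' t] (f ⁻¹' s) = μ (f ⁻¹' s) :=
    cond_preimage_apply_preimage_of_indepFun hZ h ht hs h0
  refine ⟨fun hf ↦ NullMeasurable.aemeasurable fun s hs ↦ ?_,
    fun hf ↦ hf.mono_ac cond_absolutelyContinuous⟩
  apply nullMeasurableSet_of_measure_add_measure_compl_le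
  calc μ (f ⁻¹' s) + μ (f ⁻¹' s)ᶜ
      = μ[|Z ⁻¹' t] (f ⁻¹' s) + μ[|Z ⁻¹' t] (f ⁻¹' s)ᶜ := by
        rw [← Set.preimage_compl, hsame hs, hsame hs.compl]
    _ = μ[|Z ⁻¹' t] (f ⁻¹' Set.univ) :=
        measure_add_measure_compl₀ (hf.nullMeasurableSet_preimage hs)
    _ ≤ μ Set.univ := (hsame .univ).le

lemma integral_cond_preimage_of_indepFun {E : Type*} [NormedAddCommGroup E] [NormedSpace ℝ E]
    [MeasurableSpace E] [BorelSpace E] [SecondCountableTopology E] {g : Ω → E}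
    (hZ : Measurable Z) (h : IndepFun Z g μ) (ht : MeasurableSet t) (h0 : μ (Z ⁻¹' t) ≠ 0) :
    ∫ ω, g ω ∂μ[|Z ⁻¹' t] = ∫ ω, g ω ∂μ := by
  by_cases hg : AEMeasurable g μ
  · have hfactor : ∫ ω in Z ⁻¹' t, g ω ∂μ = μ.real (Z ⁻¹' t) • ∫ ω, g ω ∂μ :=
      Indep.setIntegral_eq_smul (f := id) hZ.comap_le ((IndepFun_iff_Indep _ _ _).1 h) hg
        ⟨t, ht, rfl⟩ aestronglyMeasurable_id
    rw [integral_cond, hfactor, inv_smul_smul₀ ((measureReal_ne_zero_iff).2 h0)]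
  · have hg' := mt (aemeasurable_cond_preimage_iff_of_indepFun hZ h ht h0).1 hg
    rw [integral_non_aestronglyMeasurable (mt AEStronglyMeasurable.aemeasurable hg'),
      integral_non_aestronglyMeasurable (mt AEStronglyMeasurable.aemeasurable hg)]

end Independence

variable [Countable ι] [MeasurableSingletonClass ι] {Z : Ω → ι}

lemma hasSum_setIntegral_fiber {E : Type*} [NormedAddCommGroup E] [NormedSpace ℝ E] {f : Ω → E}
    (hZ : Measurable Z) (hf : Integrable f μ) :
    HasSum (fun i ↦ ∫ ω in Z ⁻¹' {i}, f ω ∂μ) (∫ ω, f ω ∂μ) := by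
  have hcover : ⋃ i, Z ⁻¹' {i} = Set.univ := by
    rw [← Set.preimage_iUnion, Set.iUnion_of_singleton, Set.preimage_univ]
  have hsum := hasSum_integral_iUnion (fun i ↦ hZ (measurableSet_singleton i))
    (pairwise_disjoint_fiber Z) (hf.integrableOn (s := ⋃ i, Z ⁻¹' {i}))
  rwa [hcover, setIntegral_univ] at hsum

lemma integral_le_of_integral_cond_fiber_le [IsProbabilityMeasure μ] {f : Ω → ℝ} {c : ℝ}
    (hZ : Measurable Z) (hf : Integrable f μ)
    (h : ∀ i, μ (Z ⁻¹' {i}) ≠ 0 → ∫ ω, f ω ∂μ[|Z ⁻¹' {i}] ≤ c) : ∫ ω, f ω ∂μ ≤ c := by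
  have hconst := hasSum_setIntegral_fiber hZ (integrable_const (μ := μ) c)
  rw [integral_const, probReal_univ, one_smul] at hconst
  refine hasSum_le (fun i ↦ ?_) (hasSum_setIntegral_fiber hZ hf) hconst
  by_cases h0 : μ (Z ⁻¹' {i}) = 0
  · rw [Measure.restrict_eq_zero.2 h0, integral_zero_measure, integral_zero_measure]
  · have hmean := h i h0
    have hpos : 0 < μ.real (Z ⁻¹' {i}) := ENNReal.toReal_pos h0 (measure_ne_top μ _)
    rw [integral_cond, smul_eq_mul, inv_mul_le_iff₀ hpos] at hmean
    rwa [setIntegral_const, smul_eq_mul]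

theorem integral_selected_cond_preimage_le [IsFiniteMeasure μ] {G : Set ι} {L : ι → Ω → ℝ}
    {c : ℝ} (hZ : Measurable Z) (hindep : ∀ i ∈ G, IndepFun Z (L i) μ)
    (hL : ∀ i ∈ G, ∫ ω, L i ω ∂μ ≤ c) (hG : μ (Z ⁻¹' G) ≠ 0)
    (hint : Integrable (fun ω ↦ L (Z ω) ω) μ[|Z ⁻¹' G]) :
    ∫ ω, L (Z ω) ω ∂μ[|Z ⁻¹' G] ≤ c := by
  have := cond_isProbabilityMeasure hG
  have hGmeas : MeasurableSet (Z ⁻¹' G) := hZ G.to_countable.measurableSet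
  refine integral_le_of_integral_cond_fiber_le hZ hint fun i hi ↦ ?_
  have hfiber : MeasurableSet (Z ⁻¹' {i}) := hZ (measurableSet_singleton i)
  have hpos := (inter_pos_of_cond_ne_zero hGmeas hi).ne'
  obtain ⟨ω, hωG, rfl⟩ := nonempty_of_measure_ne_zero hpos
  have hsub : Z ⁻¹' {Z ω} ⊆ Z ⁻¹' G := Set.preimage_mono (Set.singleton_subset_iff.2 hωG)
  rw [Set.inter_eq_right.2 hsub] at hpos
  rw [cond_cond_eq_cond_inter hGmeas hfiber, Set.inter_eq_right.2 hsub]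
  calc ∫ ω', L (Z ω') ω' ∂μ[|Z ⁻¹' {Z ω}]
      = ∫ ω', L (Z ω) ω' ∂μ[|Z ⁻¹' {Z ω}] :=
        integral_congr_ae ((ae_cond_mem hfiber).mono fun ω' hω' ↦ congrArg (L · ω') hω')
    _ = ∫ ω', L (Z ω) ω' ∂μ :=
        integral_cond_preimage_of_indepFun hZ (hindep _ hωG) (measurableSet_singleton _) hpos
    _ ≤ c := hL _ hωG

end Conditioning

/-- The false discovery proportion of a selection `R` when `S` is the true active set; the
maximum makes it `0` for the empty selection. -/
noncomputable def falseDiscoveryProportion {α : Type*} [Fintype α] [DecidableEq α]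
    (S R : Finset α) : ℝ :=
  ((R ∩ Sᶜ).card : ℝ) / max (R.card : ℝ) 1

theorem two_stage_conditional_fdr_control_general
    {Ω ι α : Type*} {mΩ : MeasurableSpace Ω} {P : Measure Ω} [IsProbabilityMeasure P]
    [MeasurableSpace ι] [Countable ι] [MeasurableSingletonClass ι] [Fintype α] [DecidableEq α]
    {Z : Ω → ι} (hZ : Measurable Z) {G : Set ι} {S : Finset α} {q : ℝ} (hq : 0 ≤ q)
    {R : ι → Ω → Finset α}
    (hindep : ∀ i ∈ G, IndepFun Z (fun ω ↦ falseDiscoveryProportion S (R i ω)) P)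
    (hFDR : ∀ i ∈ G, ∫ ω, falseDiscoveryProportion S (R i ω) ∂P ≤ q)
    (hG : P (Z ⁻¹' G) ≠ 0) :
    ∫ ω, falseDiscoveryProportion S (R (Z ω) ω) ∂P[|Z ⁻¹' G] ≤ q := by
  by_cases hint : Integrable (fun ω ↦ falseDiscoveryProportion S (R (Z ω) ω)) P[|Z ⁻¹' G]
  · exact integral_selected_cond_preimage_le
      (L := fun i ω ↦ falseDiscoveryProportion S (R i ω)) hZ hindep hFDR hG hint
  · exact (integral_undef hint).trans_le hq

/-- Conditional FDR control of the two-stage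
(screening then knockoff) procedure with data splitting (Theorem 9(b)). -/
theorem two_stage_conditional_fdr_control
    {Ω : Type*} [mΩ : MeasurableSpace Ω] (P : Measure Ω) [IsProbabilityMeasure P]
    {m : ℕ}
    -- F₁ : the sub-σ-algebra generated by the first half of the data
    (F1 : MeasurableSpace Ω) (hF1 : F1 ≤ mΩ)
    -- the screened set, F₁-measurable
    (Ahat : Ω → Finset (Fin m))
    (hAhat : @Measurable Ω (Finset (Fin m)) F1 ⊤ Ahat)
    -- the true active set and the target FDR level
    (S : Finset (Fin m)) (q : ℝ) (hq : q ∈ Set.Icc (0 : ℝ) 1)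
    -- for each screened set A containing S, the GKnockoff selection on A
    (Shat : Finset (Fin m) → Ω → Finset (Fin m))
    (hsub : ∀ A, S ⊆ A → ∀ ω, Shat A ω ⊆ A)
    (hindep : ∀ A, S ⊆ A →
      Indep F1 (MeasurableSpace.comap (Shat A) ⊤) P)
    (hFDR : ∀ A, S ⊆ A →
      ∫ ω, ((Shat A ω ∩ Sᶜ).card : ℝ) / max ((Shat A ω).card : ℝ) 1 ∂P ≤ q)
    -- the sure-screening event has positive probability
    (hE : 0 < P {ω | S ⊆ Ahat ω}) :
    ∫ ω, ((Shat (Ahat ω) ω ∩ Sᶜ).card : ℝ) / max ((Shat (Ahat ω) ω).card : ℝ) 1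
        ∂(P[|{ω | S ⊆ Ahat ω}]) ≤ q := by
  have hind : ∀ A, S ⊆ A →
      IndepFun Ahat (fun ω ↦ falseDiscoveryProportion S (Shat A ω)) P := fun A hA ↦
    indepFun_of_indep (hindep A hA) (hAhat.mono le_rfl le_top)
      ((measurable_from_top (f := falseDiscoveryProportion S)).comp (comap_measurable (Shat A)))
  exact two_stage_conditional_fdr_control_general (G := {A | S ⊆ A}) (hAhat.mono hF1 le_top)
    hq.1 hind hFDR hE.ne'
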